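/- arXiv:math/0701439 — 2 statements merged into one kernel-verified Lean document; each statement's English description precedes it below -/
import Mathlib

section
/- Let 1 < p < ∞, r > 0 and fix an integer 1 ≤ k ≤ n. Then the function u(x) = ∫_r^{d_k(x)} s^{(1−k)/(p−1)} ds, defined for x ∈ ℝⁿ with d_k(x) > r, is twice continuously differentiable there and satisfies the p-Laplace equation pointwise: ∑_{i=1}^n ∂/∂x_i ( u_{x_i}(x) · |∇u(x)|^{p−2} ) = 0, where u_{x_i} = ∂u/∂x_i and |∇u| is the Euclidean norm of the gradient of u. In fact |∇u(x)|^{p−2}∇u(x) is the vector field whose i-th component equals x_i · d_k(x)^{−k} for 1 ≤ i ≤ k and 0 for k < i ≤ n, and this vector field is divergence-free on {x : d_k(x) > r}. -/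
/-- `d_k(x) = (∑_{i<k} x_i²)^{1/2}`. -/
noncomputable def dk (n k : ℕ) (x : EuclideanSpace ℝ (Fin n)) : ℝ :=
  Real.sqrt (∑ i ∈ Finset.univ.filter (fun i : Fin n => (i : ℕ) < k), x i ^ 2)

open Filter

/-- The projection of `x` onto its first `k` coordinates. -/
noncomputable def truncation (n k : ℕ) (x : EuclideanSpace ℝ (Fin n)) : EuclideanSpace ℝ (Fin n) :=
  WithLp.toLp 2 fun i => if (i : ℕ) < k then x i else 0

lemma truncation_apply (n k : ℕ) (x : EuclideanSpace ℝ (Fin n)) (i : Fin n) :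
    truncation n k x i = if (i : ℕ) < k then x i else 0 := rfl

lemma norm_truncation (n k : ℕ) (x : EuclideanSpace ℝ (Fin n)) :
    ‖truncation n k x‖ = dk n k x := by
  rw [EuclideanSpace.norm_eq, dk, Finset.sum_filter]
  congr 1
  refine Finset.sum_congr rfl fun i _ => ?_
  rw [truncation_apply]
  split_ifs <;> simp

lemma sum_sq_eq_dk_sq (n k : ℕ) (x : EuclideanSpace ℝ (Fin n)) :
    ∑ i ∈ Finset.univ.filter (fun i : Fin n => (i : ℕ) < k), x i ^ 2 = dk n k x ^ 2 :=
  (Real.sq_sqrt (Finset.sum_nonneg fun _ _ => sq_nonneg _)).symm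

lemma continuous_dk (n k : ℕ) : Continuous (dk n k) := by
  unfold dk
  fun_prop

lemma isOpen_lt_dk (n k : ℕ) (r : ℝ) : IsOpen {x | r < dk n k x} :=
  isOpen_lt continuous_const (continuous_dk n k)

lemma contDiffAt_dk {n k : ℕ} {x : EuclideanSpace ℝ (Fin n)} {m : WithTop ℕ∞}
    (hx : 0 < dk n k x) : ContDiffAt ℝ m (dk n k) x := by
  refine ContDiffAt.sqrt (ContDiff.contDiffAt ?_) (Real.sqrt_pos.1 hx).ne'
  fun_prop

lemma hasGradientAt_dk {n k : ℕ} {x : EuclideanSpace ℝ (Fin n)} (hx : 0 < dk n k x) :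
    HasGradientAt (dk n k) ((dk n k x)⁻¹ • truncation n k x) x := by
  have hsum : HasFDerivAt
      (fun y : EuclideanSpace ℝ (Fin n) =>
        ∑ i ∈ Finset.univ.filter (fun i : Fin n => (i : ℕ) < k), y i ^ 2)
      (∑ i ∈ Finset.univ.filter (fun i : Fin n => (i : ℕ) < k),
        (2 * x i) • (EuclideanSpace.proj i : EuclideanSpace ℝ (Fin n) →L[ℝ] ℝ)) x := by
    refine HasFDerivAt.fun_sum fun i _ => ?_
    simpa using (EuclideanSpace.proj i : EuclideanSpace ℝ (Fin n) →L[ℝ] ℝ).hasFDerivAt.pow 2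
  rw [hasGradientAt_iff_hasFDerivAt]
  refine (hsum.sqrt (Real.sqrt_pos.1 hx).ne').congr_fderiv ?_
  ext y
  change 1 / (2 * dk n k x) * _ = _
  rw [ContinuousLinearMap.coe_coe, sum_apply, InnerProductSpace.toDual_apply_apply,
    real_inner_smul_left, PiLp.inner_apply, Finset.sum_filter, Finset.mul_sum, Finset.mul_sum]
  refine Finset.sum_congr rfl fun i _ => ?_
  rw [truncation_apply]
  split_ifs
  · simp
    field_simp
  · simp

lemma hasDerivAt_integral_rpow {r t : ℝ} (a : ℝ) (hr : 0 < r) (ht : 0 < t) :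
    HasDerivAt (fun t => ∫ s in r..t, s ^ a) (t ^ a) t := by
  have hcont : ContinuousOn (fun s : ℝ => s ^ a) (Set.Ioi 0) := fun s hs =>
    (Real.continuousAt_rpow_const s a (Or.inl (ne_of_gt hs))).continuousWithinAt
  refine intervalIntegral.integral_hasDerivAt_right
    (intervalIntegral.intervalIntegrable_rpow (Or.inr ?_))
    (hcont.stronglyMeasurableAtFilter isOpen_Ioi t ht)
    (Real.continuousAt_rpow_const t a (Or.inl ht.ne'))
  exact Set.notMem_uIcc_of_lt hr ht

lemma contDiffOn_integral_rpow {r : ℝ} (a : ℝ) (hr : 0 < r) :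
    ContDiffOn ℝ 2 (fun t => ∫ s in r..t, s ^ a) (Set.Ioi 0) := by
  rw [show (2 : WithTop ℕ∞) = 1 + 1 by norm_num, contDiffOn_succ_iff_deriv_of_isOpen isOpen_Ioi]
  refine ⟨fun t ht => (hasDerivAt_integral_rpow a hr ht).differentiableAt.differentiableWithinAt,
    by simp, ?_⟩
  refine ContDiffOn.congr (f := fun t : ℝ => t ^ a) (fun t ht => ?_)
    fun t ht => (hasDerivAt_integral_rpow a hr ht).deriv
  exact (Real.contDiffAt_rpow_const_of_ne (ne_of_gt ht)).contDiffWithinAt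

lemma hasGradientAt_integral_rpow_dk {n k : ℕ} {r : ℝ} (a : ℝ) (hr : 0 < r)
    {x : EuclideanSpace ℝ (Fin n)} (hx : 0 < dk n k x) :
    HasGradientAt (fun y => ∫ s in r..(dk n k y), s ^ a)
      ((dk n k x) ^ (a - 1) • truncation n k x) x := by
  have h := (hasDerivAt_integral_rpow a hr hx).comp_hasFDerivAt x
    (hasGradientAt_dk hx).hasFDerivAt
  rw [hasGradientAt_iff_hasFDerivAt]
  refine h.congr_fderiv ?_
  rw [Real.rpow_sub_one hx.ne', div_eq_mul_inv, mul_smul, map_smul]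
  simp

/-- The field `|∇u|^{p-2}∇u` for a radial power profile of exponent `(1-k)/(p-1)`. -/
lemma norm_rpow_smul_radial {n k : ℕ} {p : ℝ} (hp : 1 < p) {x : EuclideanSpace ℝ (Fin n)}
    (hx : 0 < dk n k x) :
    ‖(dk n k x) ^ ((1 - (k : ℝ)) / (p - 1) - 1) • truncation n k x‖ ^ (p - 2) •
      ((dk n k x) ^ ((1 - (k : ℝ)) / (p - 1) - 1) • truncation n k x) =
      (dk n k x) ^ (-(k : ℝ)) • truncation n k x := by
  have hp' : p - 1 ≠ 0 := by linarith
  rw [norm_smul, norm_truncation, Real.norm_of_nonneg (Real.rpow_nonneg hx.le _),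
    ← Real.rpow_add_one hx.ne', ← Real.rpow_mul hx.le, smul_smul, ← Real.rpow_add hx]
  congr 2
  field_simp
  ring

lemma fderiv_coord_mul_dk_rpow {n k : ℕ} (b : ℝ) {x : EuclideanSpace ℝ (Fin n)}
    (hx : 0 < dk n k x) {i : Fin n} (hi : (i : ℕ) < k) :
    fderiv ℝ (fun y : EuclideanSpace ℝ (Fin n) => y i * (dk n k y) ^ b) x
      (EuclideanSpace.single i 1) =
      (dk n k x) ^ b + b * (dk n k x) ^ (b - 2) * x i ^ 2 := by
  have h := (EuclideanSpace.proj i : EuclideanSpace ℝ (Fin n) →L[ℝ] ℝ).hasFDerivAt (x := x) |>.mul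
    ((hasGradientAt_dk hx).hasFDerivAt.rpow_const (p := b) (Or.inl hx.ne'))
  have h2 : (dk n k x) ^ (b - 1) = (dk n k x) ^ (b - 2) * dk n k x := by
    rw [← Real.rpow_add_one hx.ne']
    ring_nf
  have h3 := h.fderiv
  change fderiv ℝ (fun y : EuclideanSpace ℝ (Fin n) => y i * (dk n k y) ^ b) x = _ at h3
  rw [h3]
  simp [EuclideanSpace.inner_single_right, truncation_apply, hi, h2]
  field_simp
  ring

lemma divergence_truncation_mul_dk_rpow {n k : ℕ} (hkn : k ≤ n) {x : EuclideanSpace ℝ (Fin n)}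
    (hx : 0 < dk n k x) :
    ∑ i : Fin n, fderiv ℝ (fun y : EuclideanSpace ℝ (Fin n) =>
      if (i : ℕ) < k then y i * (dk n k y) ^ (-(k : ℝ)) else 0) x
      (EuclideanSpace.single i 1) = 0 := by
  have hcard : (Finset.univ.filter (fun i : Fin n => (i : ℕ) < k)).card = k := by
    simp [Fin.card_filter_val_lt, hkn]
  have hterm : ∀ i : Fin n, fderiv ℝ (fun y : EuclideanSpace ℝ (Fin n) =>
      if (i : ℕ) < k then y i * (dk n k y) ^ (-(k : ℝ)) else 0) x (EuclideanSpace.single i 1) =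
      if (i : ℕ) < k then
        (dk n k x) ^ (-(k : ℝ)) + -(k : ℝ) * (dk n k x) ^ (-(k : ℝ) - 2) * x i ^ 2 else 0 := by
    intro i
    split_ifs with hi
    · exact fderiv_coord_mul_dk_rpow _ hx hi
    · simp
  have hpow : (dk n k x) ^ (-(k : ℝ) - 2) * dk n k x ^ 2 = (dk n k x) ^ (-(k : ℝ)) := by
    rw [← Real.rpow_add_natCast hx.ne']
    norm_num
  rw [Finset.sum_congr rfl fun i _ => hterm i, ← Finset.sum_filter, Finset.sum_add_distrib,
    ← Finset.mul_sum, sum_sq_eq_dk_sq, Finset.sum_const, hcard, mul_assoc, hpow, nsmul_eq_mul]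
  ring

/-- The function `u(x) = ∫_r^{d_k(x)} s^{(1-k)/(p-1)} ds` is `C²` on `{d_k > r}` and is a
pointwise solution of the `p`-Laplace equation there; moreover `|∇u|^{p-2}∇u` is the
vector field `V` with `V_i(x) = x_i d_k(x)^{-k}` for `i < k` and `0` otherwise, and `V` is
divergence free on `{d_k > r}`. -/
theorem stmt_4 (n k : ℕ) (hk1 : 1 ≤ k) (hkn : k ≤ n) (p r : ℝ) (hp : 1 < p) (hr : 0 < r)
    (u : EuclideanSpace ℝ (Fin n) → ℝ)
    (hu : ∀ x, u x = ∫ s in r..(dk n k x), s ^ ((1 - (k : ℝ)) / (p - 1)))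
    (V : EuclideanSpace ℝ (Fin n) → EuclideanSpace ℝ (Fin n))
    (hV : ∀ x i, V x i = if (i : ℕ) < k then x i * (dk n k x) ^ (-(k : ℝ)) else 0) :
    ContDiffOn ℝ 2 u {x | r < dk n k x} ∧
    (∀ x, r < dk n k x → (‖gradient u x‖ ^ (p - 2)) • gradient u x = V x) ∧
    (∀ x, r < dk n k x →
      ∑ i : Fin n, fderiv ℝ (fun y => V y i) x (EuclideanSpace.single i 1) = 0) ∧
    (∀ x, r < dk n k x →
      ∑ i : Fin n, fderiv ℝ
        (fun y => fderiv ℝ u y (EuclideanSpace.single i 1) * ‖gradient u y‖ ^ (p - 2))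
        x (EuclideanSpace.single i 1) = 0) := by
  have hgrad : ∀ x, r < dk n k x → HasGradientAt u
      ((dk n k x) ^ ((1 - (k : ℝ)) / (p - 1) - 1) • truncation n k x) x := by
    intro x hx
    rw [funext hu]
    exact hasGradientAt_integral_rpow_dk _ hr (hr.trans hx)
  have hfield : ∀ x, r < dk n k x → (‖gradient u x‖ ^ (p - 2)) • gradient u x = V x := by
    intro x hx
    rw [(hgrad x hx).gradient, norm_rpow_smul_radial hp (hr.trans hx)]
    ext i
    simp [hV, truncation_apply, mul_comm]
  have hdiv : ∀ x, r < dk n k x →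
      ∑ i : Fin n, fderiv ℝ (fun y => V y i) x (EuclideanSpace.single i 1) = 0 := by
    intro x hx
    simp only [hV]
    exact divergence_truncation_mul_dk_rpow hkn (hr.trans hx)
  refine ⟨?_, hfield, hdiv, fun x hx => ?_⟩
  · rw [funext hu]
    exact (contDiffOn_integral_rpow _ hr).comp
      (fun x hx => (contDiffAt_dk (hr.trans hx)).contDiffWithinAt) fun x hx => hr.trans hx
  · rw [← hdiv x hx]
    refine Finset.sum_congr rfl fun i _ => ?_
    congr 1
    refine EventuallyEq.fderiv_eq ?_
    filter_upwards [(isOpen_lt_dk n k r).mem_nhds hx] with y hy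
    rw [← hfield y hy, (hgrad y hy).hasFDerivAt.fderiv, ← (hgrad y hy).gradient,
      InnerProductSpace.toDual_apply_apply, EuclideanSpace.inner_single_right]
    simp [mul_comm]
end

section
/- Let p > 1 and let a, b ∈ ℝⁿ with a ≠ b. Then | |a|^{p−2}a − |b|^{p−2}b | ≤ (1 + |p − 2|) · |a − b| · ∫₀¹ |λa + (1−λ)b|^{p−2} dλ. -/
open MeasureTheory Set

open scoped RealInnerProductSpace

/-- `|x| ^ r` is interval integrable as soon as `-1 < r`. -/
theorem intervalIntegrable_abs_rpow {r : ℝ} (hr : -1 < r) (s t : ℝ) :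
    IntervalIntegrable (fun x : ℝ => |x| ^ r) volume s t := by
  have nonneg : ∀ u : ℝ, 0 ≤ u → IntervalIntegrable (fun x : ℝ => |x| ^ r) volume 0 u := by
    intro u hu
    refine (intervalIntegral.intervalIntegrable_rpow' (a := 0) (b := u) hr).congr ?_
    intro x hx
    rw [uIoc_of_le hu] at hx
    simp only [abs_of_pos hx.1]
  have all : ∀ u : ℝ, IntervalIntegrable (fun x : ℝ => |x| ^ r) volume 0 u := by
    intro u
    rcases le_total 0 u with hu | hu
    · exact nonneg u hu
    · have h := (IntervalIntegrable.iff_comp_neg (by simp)).1 (nonneg (-u) (by linarith))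
      simpa using h
  exact (all s).symm.trans (all t)

section

variable {E : Type*} [NormedAddCommGroup E] [InnerProductSpace ℝ E]

/-- `‖x‖ ^ (p - 2) • x` depends continuously on `x` when `1 < p`. -/
theorem continuous_norm_rpow_smul {p : ℝ} (hp : 1 < p) :
    Continuous fun x : E => ‖x‖ ^ (p - 2) • x := by
  rw [continuous_iff_continuousAt]
  intro x
  by_cases hx : x = 0
  · subst hx
    have hcont : Continuous fun y : E => ‖y‖ ^ (p - 1) :=
      continuous_norm.rpow_const fun _ => Or.inr (by linarith)
    have hlim := hcont.tendsto 0
    rw [norm_zero, Real.zero_rpow (by linarith)] at hlim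
    rw [ContinuousAt, smul_zero]
    refine squeeze_zero_norm (fun y => ?_) hlim
    by_cases hy : y = 0
    · simpa [hy] using Real.rpow_nonneg le_rfl _
    · rw [norm_smul, Real.norm_of_nonneg (by positivity),
        ← Real.rpow_add_one (norm_ne_zero_iff.2 hy)]
      apply le_of_eq
      congr 1
      ring
  · exact (continuousAt_id.norm.rpow_const (Or.inl (norm_ne_zero_iff.2 hx))).smul continuousAt_id

/-- The derivative of `‖γ‖ ^ (p - 2) • γ` along a curve `γ`. -/
theorem HasDerivAt.norm_rpow_smul {γ : ℝ → E} {v : E} {t : ℝ} (p : ℝ) (hγ : HasDerivAt γ v t)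
    (h0 : γ t ≠ 0) :
    HasDerivAt (fun s => ‖γ s‖ ^ (p - 2) • γ s)
      (‖γ t‖ ^ (p - 2) • v + ((p - 2) * ‖γ t‖ ^ (p - 4) * ⟪γ t, v⟫) • γ t) t := by
  have hpos : 0 < ‖γ t‖ := norm_pos_iff.2 h0
  have hsq : ∀ (x : E) (q : ℝ), (‖x‖ ^ 2) ^ (q / 2) = ‖x‖ ^ q := fun x q => by
    rw [← Real.rpow_natCast, ← Real.rpow_mul (norm_nonneg x)]
    congr 1
    push_cast
    ring
  have hpow := (hγ.norm_sq.rpow_const (p := (p - 2) / 2) (Or.inl (by positivity))).smul hγ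
  rw [show (p - 2) / 2 - 1 = (p - 4) / 2 by ring] at hpow
  simp only [hsq] at hpow
  convert hpow using 3
  · rfl
  · ring

theorem norm_deriv_norm_rpow_smul_le (p : ℝ) (x v : E) :
    ‖‖x‖ ^ (p - 2) • v + ((p - 2) * ‖x‖ ^ (p - 4) * ⟪x, v⟫) • x‖ ≤
      (1 + |p - 2|) * ‖v‖ * ‖x‖ ^ (p - 2) := by
  by_cases hx : x = 0
  · subst hx
    have h0 : 0 ≤ (0 : ℝ) ^ (p - 2) := Real.rpow_nonneg le_rfl _
    simp only [norm_zero, smul_zero, add_zero, norm_smul, Real.norm_of_nonneg h0]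
    nlinarith [mul_nonneg (mul_nonneg (abs_nonneg (p - 2)) (norm_nonneg v)) h0]
  · have hpos : 0 < ‖x‖ := norm_pos_iff.2 hx
    have hpow : ‖x‖ ^ (p - 2) = ‖x‖ ^ (p - 4) * ‖x‖ * ‖x‖ := by
      rw [← Real.rpow_add_one hpos.ne', ← Real.rpow_add_one hpos.ne']
      congr 1
      ring
    have hnonneg : 0 ≤ ‖x‖ ^ (p - 4) := by positivity
    calc _ ≤ ‖‖x‖ ^ (p - 2) • v‖ + ‖((p - 2) * ‖x‖ ^ (p - 4) * ⟪x, v⟫) • x‖ := norm_add_le _ _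
      _ = ‖x‖ ^ (p - 2) * ‖v‖ + |p - 2| * ‖x‖ ^ (p - 4) * |⟪x, v⟫| * ‖x‖ := by
        rw [norm_smul, norm_smul, norm_mul, norm_mul, Real.norm_of_nonneg hnonneg,
          Real.norm_of_nonneg (by positivity : 0 ≤ ‖x‖ ^ (p - 2)), Real.norm_eq_abs,
          Real.norm_eq_abs]
      _ ≤ ‖x‖ ^ (p - 2) * ‖v‖ + |p - 2| * ‖x‖ ^ (p - 4) * (‖x‖ * ‖v‖) * ‖x‖ := by
        gcongr
        exact abs_real_inner_le_norm x v
      _ = _ := by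
        rw [hpow]
        ring

/-- If the line through `a` and `b` vanishes at `t₀`, it is a multiple of `a - b`. -/
theorem lineCombination_eq_of_eq_zero {a b : E} {t₀ : ℝ} (h : t₀ • a + (1 - t₀) • b = 0) (t : ℝ) :
    t • a + (1 - t) • b = (t - t₀) • (a - b) := by
  rw [← sub_zero (t • a + (1 - t) • b), ← h]
  module

theorem intervalIntegrable_norm_rpow_lineCombination {p : ℝ} (hp : 1 < p) (a b : E) :
    IntervalIntegrable (fun t : ℝ => ‖t • a + (1 - t) • b‖ ^ (p - 2)) volume 0 1 := by
  by_cases h : ∃ t₀ : ℝ, t₀ • a + (1 - t₀) • b = 0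
  · obtain ⟨t₀, ht₀⟩ := h
    simp only [lineCombination_eq_of_eq_zero ht₀, norm_smul, Real.norm_eq_abs,
      Real.mul_rpow (abs_nonneg _) (norm_nonneg _)]
    have := (intervalIntegrable_abs_rpow (r := p - 2) (by linarith) (0 - t₀) (1 - t₀)).comp_sub_right
      t₀
    simpa using this.mul_const (‖a - b‖ ^ (p - 2))
  · push Not at h
    refine Continuous.intervalIntegrable (Continuous.rpow_const (by fun_prop) fun t => ?_) _ _
    exact Or.inl (norm_ne_zero_iff.2 (h t))

theorem norm_rpow_smul_sub_le [CompleteSpace E] {p : ℝ} (hp : 1 < p) {a b : E} (hab : a ≠ b) :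
    ‖‖a‖ ^ (p - 2) • a - ‖b‖ ^ (p - 2) • b‖ ≤
      (1 + |p - 2|) * ‖a - b‖ * ∫ l in (0 : ℝ)..1, ‖l • a + (1 - l) • b‖ ^ (p - 2) := by
  set γ : ℝ → E := fun t => t • a + (1 - t) • b with hγ_def
  have hγ : Continuous γ := by fun_prop
  have hderiv : ∀ t, HasDerivAt γ (a - b) t := fun t => by
    have h := ((hasDerivAt_id t).smul_const a).add
      (((hasDerivAt_id t).const_sub 1).smul_const b)
    exact h.congr_deriv (by module)
  set f' : ℝ → E := fun t =>
    ‖γ t‖ ^ (p - 2) • (a - b) + ((p - 2) * ‖γ t‖ ^ (p - 4) * ⟪γ t, a - b⟫) • γ t with hf'_def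
  have hbound : ∀ t, ‖f' t‖ ≤ (1 + |p - 2|) * ‖a - b‖ * ‖γ t‖ ^ (p - 2) := fun t =>
    norm_deriv_norm_rpow_smul_le p (γ t) (a - b)
  have hint : IntervalIntegrable (fun t => (1 + |p - 2|) * ‖a - b‖ * ‖γ t‖ ^ (p - 2))
      volume 0 1 :=
    (intervalIntegrable_norm_rpow_lineCombination hp a b).const_mul _
  have hnorm : Measurable fun t => ‖γ t‖ := hγ.norm.measurable
  have hinner : Measurable fun t => ⟪γ t, a - b⟫ := (hγ.inner continuous_const).measurable
  have hmeas : StronglyMeasurable f' :=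
    ((hnorm.pow_const _).stronglyMeasurable.smul stronglyMeasurable_const).add
      ((((hnorm.pow_const _).const_mul _).mul hinner).stronglyMeasurable.smul
        hγ.stronglyMeasurable)
  have hf'int : IntervalIntegrable f' volume 0 1 :=
    hint.mono_fun' hmeas.aestronglyMeasurable (Filter.Eventually.of_forall hbound)
  have hzeros : {t | γ t = 0}.Countable := by
    refine Set.Subsingleton.countable fun s hs t ht => ?_
    have h := lineCombination_eq_of_eq_zero (show t • a + (1 - t) • b = 0 from ht) s
    rw [show s • a + (1 - s) • b = 0 from hs, eq_comm, smul_eq_zero, sub_eq_zero, sub_eq_zero] at h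
    exact h.resolve_right hab
  have hFTC := integral_eq_of_hasDerivAt_off_countable (fun t => ‖γ t‖ ^ (p - 2) • γ t) f'
    hzeros ((continuous_norm_rpow_smul hp).comp hγ).continuousOn
    (fun t ht => (hderiv t).norm_rpow_smul p ht.2) hf'int
  have hends : ‖a‖ ^ (p - 2) • a - ‖b‖ ^ (p - 2) • b = ∫ t in (0 : ℝ)..1, f' t := by
    rw [hFTC]
    simp [hγ_def]
  rw [hends, ← intervalIntegral.integral_const_mul]
  exact intervalIntegral.norm_integral_le_of_norm_le zero_le_one
    (Filter.Eventually.of_forall fun t _ => hbound t) hint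

end


/-- Inequality (nb4): for `p > 1` and `a ≠ b` in `ℝⁿ`,
`| |a|^(p-2)a - |b|^(p-2)b | ≤ (1+|p-2|) |a-b| ∫₀¹ |λa+(1-λ)b|^(p-2) dλ`. -/
theorem stmt_14 (n : ℕ) (p : ℝ) (hp : 1 < p) (a b : EuclideanSpace ℝ (Fin n)) (hab : a ≠ b) :
    ‖‖a‖ ^ (p - 2) • a - ‖b‖ ^ (p - 2) • b‖ ≤
      (1 + |p - 2|) * ‖a - b‖ * ∫ l in (0 : ℝ)..1, ‖l • a + (1 - l) • b‖ ^ (p - 2) := by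
  exact norm_rpow_smul_sub_le hp hab
end
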